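/- arXiv:2512.14966 — 2 statements merged into one kernel-verified Lean document; each statement's English description precedes it below -/
import Mathlib

section
/- Let X be a real Banach space and (e_i)_{i≥1} a normalized unconditional basis of X, and for each k ∈ ℕ let X_k = span{e_1,…,e_k}. Then (e_i) is equivalent to the canonical basis of c_0 (i.e., there is C ≥ 1 such that C^{-1}·max_i |a_i| ≤ ‖∑ a_i e_i‖ ≤ C·max_i |a_i| for all finitely supported scalars (a_i)) if and only if there exists a sequence (F_k : S_{ℓ∞^k} → S_{X_k})_{k≥1} of step preserving homeomorphisms that is equi-uniformly continuous. -/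
/-- The sup norm (`ℓ∞` norm) on `ℝ^k`. -/
noncomputable def supNorm {k : ℕ} (x : Fin k → ℝ) : ℝ := ⨆ i, |x i|

/-- `supNorm` is the norm of the product space `Fin k → ℝ`. -/
lemma supNorm_eq_norm {k : ℕ} (x : Fin k → ℝ) : supNorm x = ‖x‖ := by
  refine le_antisymm ?_ ?_
  · exact Real.iSup_le (fun i => norm_le_pi_norm x i) (norm_nonneg x)
  · refine (pi_norm_le_iff_of_nonneg (Real.iSup_nonneg fun i => abs_nonneg (x i))).2 fun i => ?_
    exact le_ciSup (f := fun i => |x i|) (Set.finite_range _).bddAbove i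

section NormalizedMap

variable {V X : Type*} [NormedAddCommGroup V] [NormedSpace ℝ V]
  [NormedAddCommGroup X] [NormedSpace ℝ X]

lemma norm_normalize_sub_normalize_le {u v : X} (hu : u ≠ 0) (hv : v ≠ 0) :
    ‖‖u‖⁻¹ • u - ‖v‖⁻¹ • v‖ ≤ 2 * ‖u‖⁻¹ * ‖u - v‖ := by
  have hu' : 0 < ‖u‖ := norm_pos_iff.2 hu
  have hv' : 0 < ‖v‖ := norm_pos_iff.2 hv
  have h : ‖u‖⁻¹ • u - ‖v‖⁻¹ • v = ‖u‖⁻¹ • (u - v) + (‖u‖⁻¹ * (‖v‖ - ‖u‖) * ‖v‖⁻¹) • v := by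
    have : ‖u‖⁻¹ * (‖v‖ - ‖u‖) * ‖v‖⁻¹ = ‖u‖⁻¹ - ‖v‖⁻¹ := by field_simp
    rw [this]
    module
  rw [h]
  refine (norm_add_le _ _).trans ?_
  rw [norm_smul, norm_smul, norm_mul, norm_mul, norm_inv, norm_inv, norm_norm, norm_norm,
    mul_assoc _ ‖v‖⁻¹, inv_mul_cancel₀ hv'.ne', mul_one]
  have h2 : ‖‖v‖ - ‖u‖‖ ≤ ‖u - v‖ := by
    rw [Real.norm_eq_abs, abs_sub_comm]
    exact abs_norm_sub_norm_le u v
  have := mul_le_mul_of_nonneg_left h2 (inv_nonneg.2 hu'.le)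
  linarith

/-- The radial normalization of an injective linear map is a bijection between unit spheres. -/
lemma LinearMap.bijOn_normalize_sphere (T : V →ₗ[ℝ] X) (hT : Function.Injective T) :
    Set.BijOn (fun x => ‖T x‖⁻¹ • T x) {x | ‖x‖ = 1} {y | y ∈ LinearMap.range T ∧ ‖y‖ = 1} := by
  have hpos : ∀ x, x ≠ 0 → 0 < ‖T x‖ := fun x hx =>
    norm_pos_iff.2 fun h => hx (hT (h.trans (map_zero T).symm))
  have hne : ∀ x : V, ‖x‖ = 1 → x ≠ 0 := by
    rintro x hx rfl
    simp at hx
  refine ⟨?_, ?_, ?_⟩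
  · intro x hx
    have := hpos x (hne x hx)
    exact ⟨Submodule.smul_mem _ _ ⟨x, rfl⟩, norm_smul_inv_norm (𝕜 := ℝ) (norm_pos_iff.1 this)⟩
  · intro x hx y hy hxy
    have hx0 := hpos x (hne x hx)
    have hy0 := hpos y (hne y hy)
    simp only [← map_smul] at hxy
    have h := hT hxy
    have h' := congrArg norm h
    rw [norm_smul, norm_smul, hx, hy, norm_inv, norm_inv, norm_norm, norm_norm, mul_one,
      mul_one] at h'
    rw [h'] at h
    exact smul_right_injective V (inv_ne_zero hy0.ne') h
  · rintro _ ⟨⟨z, rfl⟩, hz⟩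
    have hz0 : z ≠ 0 := by
      rintro rfl
      simp at hz
    have hz' : 0 < ‖z‖ := norm_pos_iff.2 hz0
    refine ⟨‖z‖⁻¹ • z, norm_smul_inv_norm (𝕜 := ℝ) hz0, ?_⟩
    simp only [map_smul, norm_smul, hz, norm_inv, norm_norm, mul_one, inv_inv]
    rw [smul_smul, mul_inv_cancel₀ hz'.ne', one_smul]

end NormalizedMap

/-- A set function bounded below by a positive constant and above by the cardinality cannot be
halved, on every nonempty set, by deleting at most `N` points. -/
lemma exists_finset_forall_le_two_mul_sdiff (g : Finset ℕ → ℝ) {c : ℝ} (hc : 0 < c)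
    (hlow : ∀ A : Finset ℕ, A.Nonempty → c ≤ g A) (hup : ∀ A : Finset ℕ, g A ≤ A.card) (N : ℕ) :
    ∃ A : Finset ℕ, A.Nonempty ∧ ∀ J ⊆ A, J.card ≤ N → g A ≤ 2 * g (A \ J) := by
  by_contra! h
  have key : ∀ (r : ℕ) (A : Finset ℕ), r * N < A.card → c * 2 ^ r ≤ g A := by
    intro r
    induction r with
    | zero =>
      intro A hA
      simpa using hlow A (Finset.card_pos.1 (by simpa using hA))
    | succ r ih =>
      intro A hA
      obtain ⟨J, hJA, hJ, hlt⟩ := h A (Finset.card_pos.1 (by omega))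
      have := ih (A \ J) (by
        rw [Finset.card_sdiff_of_subset hJA]
        rw [Nat.succ_mul] at hA
        omega)
      rw [pow_succ]
      linarith
  have hlim : Filter.Tendsto (fun r : ℕ => (N + 1 : ℝ) * ((r : ℝ) ^ 1 / 2 ^ r)) Filter.atTop
      (nhds ((N + 1 : ℝ) * 0)) :=
    (tendsto_pow_const_div_const_pow_of_one_lt 1 one_lt_two).const_mul _
  rw [mul_zero] at hlim
  obtain ⟨r, hr, hr1⟩ := ((hlim.eventually (gt_mem_nhds hc)).and
    (Filter.eventually_ge_atTop 1)).exists
  have h1 := (key r (Finset.range (r * N + 1)) (by simp)).trans (hup _)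
  rw [Finset.card_range] at h1
  push_cast at h1
  rw [pow_one, ← mul_div_assoc, div_lt_iff₀ (by positivity)] at hr
  have : (1 : ℝ) ≤ r := by exact_mod_cast hr1
  linarith

/-- Rounding the coordinates of a unit vector of `ℓ∞^k` down to multiples of `1 / m` gives a
unit vector at distance at most `1 / m`. -/
lemma norm_floor_div_and_dist_le {k m : ℕ} (hm : 0 < m) (x : Fin k → ℝ) (hx : ‖x‖ = 1) :
    ‖(fun i => (⌊m * x i⌋ : ℝ) / m : Fin k → ℝ)‖ = 1 ∧
      ‖x - (fun i => (⌊m * x i⌋ : ℝ) / m : Fin k → ℝ)‖ ≤ 1 / m ∧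
      ∀ i, ⌊m * x i⌋ ∈ Finset.Icc (-m : ℤ) m := by
  have hm' : (0 : ℝ) < m := by exact_mod_cast hm
  have hxi : ∀ i, |x i| ≤ 1 := fun i => hx ▸ norm_le_pi_norm x i
  have hmem : ∀ i, ⌊m * x i⌋ ∈ Finset.Icc (-m : ℤ) m := by
    intro i
    have h := abs_le.1 (hxi i)
    rw [Finset.mem_Icc]
    constructor
    · rw [Int.le_floor]
      push_cast
      nlinarith
    · have : (⌊m * x i⌋ : ℝ) ≤ ((m : ℤ) : ℝ) := by
        refine (Int.floor_le _).trans ?_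
        push_cast
        nlinarith
      exact_mod_cast this
  refine ⟨le_antisymm ?_ ?_, ?_, hmem⟩
  · refine (pi_norm_le_iff_of_nonneg zero_le_one).2 fun i => ?_
    obtain ⟨h1, h2⟩ := Finset.mem_Icc.1 (hmem i)
    have h1' : -(m : ℝ) ≤ ⌊m * x i⌋ := by exact_mod_cast h1
    have h2' : (⌊m * x i⌋ : ℝ) ≤ m := by exact_mod_cast h2
    rw [Real.norm_eq_abs, abs_le, le_div_iff₀ hm', div_le_iff₀ hm']
    constructor <;> linarith
  · obtain ⟨i, hi⟩ : ∃ i, |x i| = 1 := by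
      by_contra! hcon
      have : ‖x‖ < 1 := (pi_norm_lt_iff one_pos).2 fun i => lt_of_le_of_ne (hxi i) (hcon i)
      linarith
    have hval : (⌊m * x i⌋ : ℝ) / m = x i := by
      rcases eq_or_eq_neg_of_abs_eq hi with h | h
      · rw [h, mul_one, Int.floor_natCast]
        simp [hm'.ne']
      · have : (m : ℝ) * -1 = ((-m : ℤ) : ℝ) := by push_cast; ring
        rw [h, this, Int.floor_intCast]
        push_cast
        field_simp
    have := norm_le_pi_norm (fun i => (⌊m * x i⌋ : ℝ) / m : Fin k → ℝ) i
    rw [← hi, ← hval]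
    exact this
  · refine (pi_norm_le_iff_of_nonneg (by positivity)).2 fun i => ?_
    have h1 := Int.floor_le (m * x i)
    have h2 := Int.lt_floor_add_one (m * x i)
    have h3 : x i - (⌊m * x i⌋ : ℝ) / m = (m * x i - ⌊m * x i⌋) / m := by field_simp
    rw [Pi.sub_apply, h3, Real.norm_eq_abs, abs_of_nonneg (div_nonneg (by linarith) hm'.le)]
    gcongr
    linarith

/-- If the partial sums `∑_{i<n} e_i` are unbounded, there are disjoint blocks whose sums have
norms growing at least geometrically with ratio `4`. -/
lemma exists_disjoint_blocks {X : Type*} [NormedAddCommGroup X] {e : ℕ → X}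
    (hnorm : ∀ i, ‖e i‖ = 1)
    (hunb : ∀ D : ℝ, ∃ n, D < ‖∑ i ∈ Finset.range n, e i‖) :
    ∃ B : ℕ → Finset ℕ, (∀ j l, j ≠ l → Disjoint (B j) (B l)) ∧
      (∀ j, 0 < ‖∑ i ∈ B j, e i‖) ∧
      ∀ j l, j < l → 4 * ‖∑ i ∈ B j, e i‖ ≤ ‖∑ i ∈ B l, e i‖ := by
  have hcard : ∀ s : Finset ℕ, ‖∑ i ∈ s, e i‖ ≤ s.card := fun s =>
    (norm_sum_le _ _).trans (by simp [hnorm])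
  have hstep : ∀ p : ℕ, ∃ q, p ≤ q ∧ 4 * (p : ℝ) + 1 < ‖∑ i ∈ Finset.Ico p q, e i‖ := by
    intro p
    obtain ⟨q, hq⟩ := hunb (5 * p + 1)
    have hpq : p ≤ q := by
      by_contra! hlt
      have h := hcard (Finset.range q)
      rw [Finset.card_range] at h
      have : (q : ℝ) < p := by exact_mod_cast hlt
      have : (0 : ℝ) ≤ p := p.cast_nonneg
      linarith
    refine ⟨q, hpq, ?_⟩
    have h := hcard (Finset.range p)
    rw [Finset.card_range] at h
    rw [← Finset.sum_range_add_sum_Ico _ hpq] at hq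
    have := norm_add_le (∑ i ∈ Finset.range p, e i) (∑ i ∈ Finset.Ico p q, e i)
    linarith
  choose f hf hf' using hstep
  set n : ℕ → ℕ := fun j => f^[j] 0
  have hsucc : ∀ j, n (j + 1) = f (n j) := fun j => Function.iterate_succ_apply' f j 0
  have hmono : Monotone n := monotone_nat_of_le_succ fun j => by rw [hsucc]; exact hf _
  refine ⟨fun j => Finset.Ico (n j) (n (j + 1)), ?_, ?_, ?_⟩
  · intro j l hjl
    rw [← Finset.disjoint_coe, Finset.coe_Ico, Finset.coe_Ico]
    exact hmono.pairwise_disjoint_on_Ico_succ hjl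
  · intro j
    have := hf' (n j)
    rw [← hsucc] at this
    have : (0 : ℝ) ≤ n j := (n j).cast_nonneg
    linarith
  · intro j l hjl
    have h1 := hf' (n l)
    rw [← hsucc] at h1
    have h2 := hcard (Finset.Ico (n j) (n (j + 1)))
    rw [Nat.card_Ico] at h2
    have h3 : ((n (j + 1) - n j : ℕ) : ℝ) ≤ n l := by
      exact_mod_cast (Nat.sub_le _ _).trans (hmono hjl)
    linarith

section Unconditional

variable {X : Type*} [NormedAddCommGroup X] [NormedSpace ℝ X] {e : ℕ → X}

lemma finset_sum_extend_fin {k : ℕ} (z : Fin k → ℝ) :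
    ∑ i : Fin k, z i • e i =
      ∑ i ∈ Finset.range k, (if h : i < k then z ⟨i, h⟩ else 0) • e i := by
  rw [Finset.sum_range]
  simp

/-- If `∑_{i<n} e_i` is unbounded, then for every `N` some unit vector of some `X_k` stays far
from all vectors of `X_k` having at most `N` distinct coordinates. -/
lemma exists_unit_vector_far_from_steps (hnorm : ∀ i, ‖e i‖ = 1) {K : ℝ} (hK : 1 ≤ K)
    (huncond : ∀ (s : Finset ℕ) (a b : ℕ → ℝ),
      (∀ i ∈ s, |a i| ≤ |b i|) → ‖∑ i ∈ s, a i • e i‖ ≤ K * ‖∑ i ∈ s, b i • e i‖)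
    (hunb : ∀ D : ℝ, ∃ n, D < ‖∑ i ∈ Finset.range n, e i‖) (N : ℕ) :
    ∃ (k : ℕ) (y : X), y ∈ Submodule.span ℝ (e '' Set.Iio k) ∧ ‖y‖ = 1 ∧
      ∀ (S : Finset ℤ) (c : Fin k → ℤ) (z : Fin k → ℝ), S.card ≤ N → (∀ i, c i ∈ S) →
        (∀ i j, c i = c j → z i = z j) → 1 / (4 * K) ≤ ‖y - ∑ i : Fin k, z i • e i‖ := by
  classical
  have hK0 : 0 < K := by linarith
  obtain ⟨B, hdisj, hpos, hgrow⟩ := exists_disjoint_blocks hnorm hunb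
  set a : ℕ → ℝ := fun j => ‖∑ i ∈ B j, e i‖⁻¹
  have ha0 : ∀ j, 0 < a j := fun j => inv_pos.2 (hpos j)
  have hsep : ∀ j l, j < l → 4 * a l ≤ a j := by
    intro j l hjl
    have h : a l ≤ (4 * ‖∑ i ∈ B j, e i‖)⁻¹ :=
      inv_anti₀ (by have := hpos j; positivity) (hgrow j l hjl)
    rw [mul_inv] at h
    change a l ≤ 4⁻¹ * a j at h
    linarith
  set w : Finset ℕ → ℕ → ℝ := fun A i => ∑ j ∈ A, if i ∈ B j then a j else 0 with hw
  have hw_mem : ∀ A j i, j ∈ A → i ∈ B j → w A i = a j := by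
    intro A j i hj hi
    simp only [hw]
    rw [Finset.sum_eq_single_of_mem j hj, if_pos hi]
    intro l _ hlj
    exact if_neg fun hl => Finset.disjoint_left.1 (hdisj l j hlj) hl hi
  have hw_zero : ∀ A i, (∀ j ∈ A, i ∉ B j) → w A i = 0 := fun A i h =>
    Finset.sum_eq_zero fun j hj => if_neg (h j hj)
  set b : Finset ℕ → X := fun A => ∑ j ∈ A, a j • ∑ i ∈ B j, e i with hb
  have hb_eq : ∀ A s, (∀ j ∈ A, B j ⊆ s) → ∑ i ∈ s, w A i • e i = b A := by
    intro A s hs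
    simp only [hw, hb, Finset.sum_smul]
    rw [Finset.sum_comm]
    refine Finset.sum_congr rfl fun j hj => ?_
    simp only [ite_smul, zero_smul]
    rw [← Finset.sum_filter, Finset.filter_mem_eq_inter, Finset.inter_eq_right.2 (hs j hj),
      Finset.smul_sum]
  have hblock : ∀ j, ‖a j • ∑ i ∈ B j, e i‖ = 1 := by
    intro j
    rw [norm_smul, Real.norm_of_nonneg (ha0 j).le]
    exact inv_mul_cancel₀ (hpos j).ne'
  have hup : ∀ A : Finset ℕ, ‖b A‖ ≤ A.card := fun A =>
    (norm_sum_le _ _).trans (by simp [hblock])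
  have hlow : ∀ A : Finset ℕ, A.Nonempty → K⁻¹ ≤ ‖b A‖ := by
    rintro A ⟨j, hj⟩
    have h := huncond (A.biUnion B) (w {j}) (w A) (by
      intro i _
      by_cases hi : i ∈ B j
      · rw [hw_mem A j i hj hi, hw_mem {j} j i (by simp) hi]
      · rw [hw_zero {j} i (by simpa using hi), abs_zero]
        exact abs_nonneg _)
    rw [hb_eq _ _ fun l hl => Finset.subset_biUnion_of_mem B hl,
      hb_eq _ _ fun l hl => by
        rw [Finset.mem_singleton.1 hl]; exact Finset.subset_biUnion_of_mem B hj] at h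
    have h1 : ‖b {j}‖ = 1 := by simpa [hb] using hblock j
    rw [h1] at h
    rw [inv_le_iff_one_le_mul₀ hK0, mul_comm]
    exact h
  obtain ⟨A, hA, hAJ⟩ := exists_finset_forall_le_two_mul_sdiff (fun A => ‖b A‖)
    (inv_pos.2 hK0) hlow hup N
  set k := (A.biUnion B).sup id + 1 with hk
  have hBk : ∀ j ∈ A, B j ⊆ Finset.range k := by
    intro j hj i hi
    rw [Finset.mem_range, hk, Nat.lt_succ_iff]
    exact Finset.le_sup (f := id) (Finset.mem_biUnion.2 ⟨j, hj, hi⟩)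
  have hR : 0 < ‖b A‖ := (inv_pos.2 hK0).trans_le (hlow A hA)
  set R := ‖b A‖
  refine ⟨k, R⁻¹ • b A, ?_, ?_, ?_⟩
  · refine Submodule.smul_mem _ _ ?_
    rw [← hb_eq A _ hBk]
    exact Submodule.sum_mem _ fun i hi => Submodule.smul_mem _ _
      (Submodule.subset_span ⟨i, Finset.mem_range.1 hi, rfl⟩)
  · rw [norm_smul, norm_inv, norm_norm]
    exact inv_mul_cancel₀ hR.ne'
  · intro S c z hS hcS hcz
    set J := A.filter fun j => ∃ i : Fin k, (i : ℕ) ∈ B j ∧ |R * z i - a j| < a j / 2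
    have hJN : J.card ≤ N := by
      refine le_trans ?_ hS
      have hex : ∀ j ∈ J, ∃ i : Fin k, |R * z i - a j| < a j / 2 := fun j hj => by
        obtain ⟨i, -, hi⟩ := (Finset.mem_filter.1 hj).2
        exact ⟨i, hi⟩
      choose! t ht using hex
      have hnot : ∀ j ∈ J, ∀ l ∈ J, j < l → c (t j) ≠ c (t l) := by
        intro j hj l hl hjl heq
        have h1 := abs_lt.1 (ht j hj)
        have h2 := abs_lt.1 (ht l hl)
        rw [hcz _ _ heq] at h1
        have := hsep j l hjl
        have := ha0 l
        linarith [h1.1, h2.2]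
      refine Finset.card_le_card_of_injOn (fun j => c (t j)) (fun j _ => hcS _) ?_
      intro j hj l hl heq
      rcases lt_trichotomy j l with h | h | h
      · exact absurd heq (hnot j hj l hl h)
      · exact h
      · exact absurd heq.symm (hnot l hl j hj h)
    have hfar := hAJ J (Finset.filter_subset _ _) hJN
    have hsub : ∀ j ∈ A \ J, B j ⊆ Finset.range k := fun j hj =>
      hBk j (Finset.mem_sdiff.1 hj).1
    have hcmp := huncond (Finset.range k) (fun i => (1 / (2 * R)) * w (A \ J) i)
      (fun i => R⁻¹ * w A i - if h : i < k then z ⟨i, h⟩ else 0) (by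
        intro i hik
        by_cases hi : ∃ j ∈ A \ J, i ∈ B j
        · obtain ⟨j, hj, hij⟩ := hi
          obtain ⟨hjA, hjJ⟩ := Finset.mem_sdiff.1 hj
          have hik' := Finset.mem_range.1 hik
          have hge : a j / 2 ≤ |R * z ⟨i, hik'⟩ - a j| := by
            by_contra! hlt
            exact hjJ (Finset.mem_filter.2 ⟨hjA, ⟨i, hik'⟩, hij, hlt⟩)
          rw [hw_mem _ j i hj hij, hw_mem _ j i hjA hij, dif_pos hik']
          have h1 : R⁻¹ * a j - z ⟨i, hik'⟩ = -(R⁻¹ * (R * z ⟨i, hik'⟩ - a j)) := by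
            field_simp
            ring
          have h2 : 1 / (2 * R) * a j = R⁻¹ * (a j / 2) := by field_simp
          rw [h1, h2, abs_neg, abs_mul, abs_mul, abs_of_pos (inv_pos.2 hR),
            abs_of_pos (half_pos (ha0 j))]
          exact mul_le_mul_of_nonneg_left hge (inv_pos.2 hR).le
        · push Not at hi
          rw [hw_zero _ i hi, mul_zero, abs_zero]
          exact abs_nonneg _)
    simp only [sub_smul, mul_smul, Finset.sum_sub_distrib, ← Finset.smul_sum] at hcmp
    rw [hb_eq _ _ hsub, hb_eq _ _ hBk, ← finset_sum_extend_fin, norm_smul,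
      Real.norm_of_nonneg (by positivity)] at hcmp
    have h3 : 1 / 4 ≤ 1 / (2 * R) * ‖b (A \ J)‖ := by
      rw [div_mul_eq_mul_div, one_mul, div_le_div_iff₀ (by norm_num) (by positivity)]
      linarith
    rw [div_le_iff₀ (by positivity)]
    linarith

/-- An unconditional normalized sequence with bounded sums `∑_{i<n} e_i` is equivalent to the
canonical basis of `c₀`. -/
lemma exists_equiv_c0_of_bounded (hnorm : ∀ i, ‖e i‖ = 1) {K : ℝ} (hK : 1 ≤ K)
    (huncond : ∀ (s : Finset ℕ) (a b : ℕ → ℝ),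
      (∀ i ∈ s, |a i| ≤ |b i|) → ‖∑ i ∈ s, a i • e i‖ ≤ K * ‖∑ i ∈ s, b i • e i‖)
    {D : ℝ} (hD : ∀ n, ‖∑ i ∈ Finset.range n, e i‖ ≤ D) :
    ∃ C : ℝ, 1 ≤ C ∧ ∀ (s : Finset ℕ) (hs : s.Nonempty) (a : ℕ → ℝ),
      C⁻¹ * s.sup' hs (fun i => |a i|) ≤ ‖∑ i ∈ s, a i • e i‖ ∧
      ‖∑ i ∈ s, a i • e i‖ ≤ C * s.sup' hs (fun i => |a i|) := by
  classical
  have hK0 : 0 < K := by linarith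
  have hD0 : 0 ≤ D := (norm_nonneg _).trans (hD 0)
  have hKD : 0 ≤ K * (K * D) := by positivity
  refine ⟨K + K * (K * D), by linarith, fun s hs a => ?_⟩
  set M := s.sup' hs (fun i => |a i|)
  have hM0 : 0 ≤ M := by
    obtain ⟨i, hi⟩ := hs
    exact (abs_nonneg (a i)).trans (Finset.le_sup' (fun i => |a i|) hi)
  constructor
  · have h : M ≤ K * ‖∑ i ∈ s, a i • e i‖ := by
      refine Finset.sup'_le _ _ fun i hi => ?_
      have h := huncond s (fun j => if j = i then a j else 0) a (by
        intro j _
        split_ifs <;> simp)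
      simpa [ite_smul, hi, norm_smul, hnorm] using h
    rw [inv_mul_le_iff₀ (by linarith)]
    refine h.trans ?_
    gcongr
    linarith
  · have h1 := huncond s a (fun _ => M) (by
      intro i hi
      rw [abs_of_nonneg hM0]
      exact Finset.le_sup' (fun i => |a i|) hi)
    have hsub : s ⊆ Finset.range (s.sup id + 1) := fun i hi =>
      Finset.mem_range.2 (Nat.lt_succ_of_le (Finset.le_sup (f := id) hi))
    have h2 := huncond (Finset.range (s.sup id + 1)) (fun i => if i ∈ s then 1 else 0)
      (fun _ => 1) (by
        intro i _
        split_ifs <;> simp)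
    simp only [ite_smul, one_smul, zero_smul] at h2
    rw [← Finset.sum_filter, Finset.filter_mem_eq_inter, Finset.inter_eq_right.2 hsub] at h2
    rw [← Finset.smul_sum, norm_smul, Real.norm_of_nonneg hM0] at h1
    have h3 : ‖∑ i ∈ s, e i‖ ≤ K * D := h2.trans (mul_le_mul_of_nonneg_left (hD _) hK0.le)
    calc ‖∑ i ∈ s, a i • e i‖ ≤ K * (M * ‖∑ i ∈ s, e i‖) := h1
      _ ≤ K * (M * (K * D)) := by gcongr
      _ = K * (K * D) * M := by ring
      _ ≤ (K + K * (K * D)) * M := by gcongr; linarith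

/-- The two-sided `c₀` estimate, written with the norm of `Fin k → ℝ`. -/
lemma norm_fin_sum_bounds {C : ℝ}
    (hC : ∀ (s : Finset ℕ) (hs : s.Nonempty) (a : ℕ → ℝ),
      C⁻¹ * s.sup' hs (fun i => |a i|) ≤ ‖∑ i ∈ s, a i • e i‖ ∧
      ‖∑ i ∈ s, a i • e i‖ ≤ C * s.sup' hs (fun i => |a i|)) {k : ℕ} (x : Fin k → ℝ) :
    C⁻¹ * ‖x‖ ≤ ‖∑ i : Fin k, x i • e i‖ ∧ ‖∑ i : Fin k, x i • e i‖ ≤ C * ‖x‖ := by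
  rcases Nat.eq_zero_or_pos k with rfl | hk
  · have hx : ‖x‖ = 0 := by rw [Subsingleton.elim x 0, norm_zero]
    simp [hx]
  · have hne : (Finset.range k).Nonempty := Finset.nonempty_range_iff.2 hk.ne'
    have h := hC (Finset.range k) hne (fun i => if h : i < k then x ⟨i, h⟩ else 0)
    have hsup : (Finset.range k).sup' hne
        (fun i => |if h : i < k then x ⟨i, h⟩ else 0|) = ‖x‖ := by
      refine le_antisymm (Finset.sup'_le _ _ fun i hi => ?_) ?_
      · rw [dif_pos (Finset.mem_range.1 hi)]
        exact norm_le_pi_norm x _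
      · have : Nonempty (Fin k) := ⟨⟨0, hk⟩⟩
        refine (pi_norm_le_iff_of_nonempty x).2 fun i => ?_
        have := Finset.le_sup' (fun i => |if h : i < k then x ⟨i, h⟩ else 0|)
          (Finset.mem_range.2 i.2)
        rwa [dif_pos i.2] at this
    rw [hsup, ← finset_sum_extend_fin] at h
    exact h

end Unconditional

/-- Corollary 5.4 of the paper: a normalized unconditional basis `(e_i)` of
a Banach space `X` is equivalent to the canonical basis of `c_0` if and only if there is an
equi-uniformly continuous sequence of step preserving homeomorphisms
`F_k : S_{ℓ∞^k} → S_{X_k}`. Here the sequence is 0-indexed, `X_k = span{e_0,…,e_{k-1}}`,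
and each `F_k` is encoded by its coordinate functions, `F_k x = ∑_{i<k} (F k x) i • e i`. -/
theorem stmt_16 {X : Type*} [NormedAddCommGroup X] [NormedSpace ℝ X] [CompleteSpace X]
    (e : ℕ → X)
    (hnorm : ∀ i, ‖e i‖ = 1)
    (hbasis : ∀ x : X, ∃! a : ℕ → ℝ,
      Filter.Tendsto (fun n => ∑ i ∈ Finset.range n, a i • e i) Filter.atTop (nhds x))
    (huncond : ∃ K : ℝ, 1 ≤ K ∧ ∀ (s : Finset ℕ) (a b : ℕ → ℝ),
      (∀ i ∈ s, |a i| ≤ |b i|) → ‖∑ i ∈ s, a i • e i‖ ≤ K * ‖∑ i ∈ s, b i • e i‖) :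
    (∃ C : ℝ, 1 ≤ C ∧ ∀ (s : Finset ℕ) (hs : s.Nonempty) (a : ℕ → ℝ),
      C⁻¹ * s.sup' hs (fun i => |a i|) ≤ ‖∑ i ∈ s, a i • e i‖ ∧
      ‖∑ i ∈ s, a i • e i‖ ≤ C * s.sup' hs (fun i => |a i|)) ↔
    (∃ F : (k : ℕ) → (Fin k → ℝ) → (Fin k → ℝ),
      -- each `F_k` is step preserving,
      (∀ k, ∀ x : Fin k → ℝ, supNorm x = 1 → ∀ i j, x i = x j → F k x i = F k x j) ∧
      -- each `F_k` is continuous on the sphere,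
      (∀ k, ContinuousOn (fun x : Fin k → ℝ => ∑ i : Fin k, F k x i • e (i : ℕ))
        {x : Fin k → ℝ | supNorm x = 1}) ∧
      -- each `F_k` is a bijection from `S_{ℓ∞^k}` onto `S_{X_k}`,
      (∀ k, Set.BijOn (fun x : Fin k → ℝ => ∑ i : Fin k, F k x i • e (i : ℕ))
        {x : Fin k → ℝ | supNorm x = 1}
        {y : X | y ∈ Submodule.span ℝ (e '' Set.Iio k) ∧ ‖y‖ = 1}) ∧
      -- the sequence `(F_k)` is equi-uniformly continuous:
      (∀ ε : ℝ, 0 < ε → ∃ δ : ℝ, 0 < δ ∧ ∀ k, ∀ x y : Fin k → ℝ,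
        supNorm x = 1 → supNorm y = 1 → supNorm (x - y) ≤ δ →
        ‖(∑ i : Fin k, F k x i • e (i : ℕ)) - ∑ i : Fin k, F k y i • e (i : ℕ)‖ ≤ ε)) := by
  obtain ⟨K, hK, hunc⟩ := huncond
  simp only [supNorm_eq_norm]
  constructor
  · rintro ⟨C, hC1, hC⟩
    have hC0 : 0 < C := by linarith
    let T : (k : ℕ) → (Fin k → ℝ) →ₗ[ℝ] X := fun k =>
      Fintype.linearCombination ℝ (fun i : Fin k => e i)
    have hT : ∀ k x, T k x = ∑ i : Fin k, x i • e i := fun k x => rfl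
    have hlow : ∀ k x, C⁻¹ * ‖x‖ ≤ ‖T k x‖ := fun k x => (norm_fin_sum_bounds hC x).1
    have hup : ∀ k x, ‖T k x‖ ≤ C * ‖x‖ := fun k x => (norm_fin_sum_bounds hC x).2
    have hsphere : ∀ k x, ‖x‖ = 1 → C⁻¹ ≤ ‖T k x‖ := fun k x hx => by
      simpa [hx] using hlow k x
    have hne : ∀ k x, ‖x‖ = 1 → T k x ≠ 0 := fun k x hx =>
      norm_pos_iff.1 ((inv_pos.2 hC0).trans_le (hsphere k x hx))
    have hinj : ∀ k, Function.Injective (T k) := by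
      intro k
      rw [injective_iff_map_eq_zero]
      intro x hx
      have h := hlow k x
      rw [hx, norm_zero] at h
      exact norm_le_zero_iff.1 (nonpos_of_mul_nonpos_right h (inv_pos.2 hC0))
    have hrange : ∀ k, LinearMap.range (T k) = Submodule.span ℝ (e '' Set.Iio k) := by
      intro k
      rw [Fintype.range_linearCombination]
      congr 1
      ext y
      constructor
      · rintro ⟨i, rfl⟩
        exact ⟨i, i.2, rfl⟩
      · rintro ⟨i, hi, rfl⟩
        exact ⟨⟨i, hi⟩, rfl⟩
    have hF : ∀ k x, ∑ i : Fin k, (‖T k x‖⁻¹ * x i) • e i = ‖T k x‖⁻¹ • T k x := by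
      intro k x
      rw [hT, Finset.smul_sum]
      simp only [mul_smul]
    refine ⟨fun k x i => ‖T k x‖⁻¹ * x i, ?_, ?_, ?_, ?_⟩
    · intro k x _ i j hij
      simp only [hij]
    · intro k
      simp only [hF]
      have hcont : Continuous (T k) := LinearMap.continuous_of_finiteDimensional _
      exact (hcont.norm.continuousOn.inv₀ fun x hx => norm_ne_zero_iff.2 (hne k x hx)).smul
        hcont.continuousOn
    · intro k
      simp only [hF, ← hrange]
      exact (T k).bijOn_normalize_sphere (hinj k)
    · intro ε hε
      refine ⟨ε / (2 * C * C), by positivity, fun k x y hx hy hxy => ?_⟩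
      simp only [hF]
      have hinv : ‖T k x‖⁻¹ ≤ C := inv_le_of_inv_le₀ hC0 (hsphere k x hx)
      calc ‖‖T k x‖⁻¹ • T k x - ‖T k y‖⁻¹ • T k y‖
          ≤ 2 * ‖T k x‖⁻¹ * ‖T k x - T k y‖ :=
            norm_normalize_sub_normalize_le (hne k x hx) (hne k y hy)
        _ ≤ 2 * C * (C * (ε / (2 * C * C))) := by
            rw [← map_sub]
            gcongr
            exact (hup k _).trans (by gcongr)
        _ = ε := by field_simp
  · rintro ⟨F, hstep, -, hbij, hunif⟩
    suffices h : ∃ D : ℝ, ∀ n, ‖∑ i ∈ Finset.range n, e i‖ ≤ D by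
      obtain ⟨D, hD⟩ := h
      exact exists_equiv_c0_of_bounded hnorm hK hunc hD
    by_contra! hunb
    obtain ⟨δ, hδ, hFδ⟩ := hunif (1 / (8 * K)) (by positivity)
    obtain ⟨m, hm⟩ := exists_nat_one_div_lt hδ
    obtain ⟨k, y, hy, hy1, hfar⟩ := exists_unit_vector_far_from_steps hnorm hK hunc hunb
      (Finset.Icc (-(m + 1 : ℕ) : ℤ) (m + 1 : ℕ)).card
    obtain ⟨x, hx, rfl⟩ := (hbij k).surjOn ⟨hy, hy1⟩
    obtain ⟨h1, h2, h3⟩ := norm_floor_div_and_dist_le (Nat.succ_pos m) x hx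
    have hclose := hFδ k x _ hx h1 (h2.trans (by push_cast; exact hm.le))
    have hge := hfar _ _ (F k fun i => (⌊(m.succ : ℝ) * x i⌋ : ℝ) / m.succ) le_rfl h3
      fun i j hij => hstep k _ h1 i j (by simp only [hij])
    have hlt : 1 / (8 * K) < 1 / (4 * K) := by
      apply one_div_lt_one_div_of_lt <;> linarith
    exact absurd (hge.trans hclose) (not_le.2 hlt)
end

section
/- Fix d ∈ ℕ with d ≥ 1, 0 < ε ≤ 1, and 1 ≤ q ≤ p < ∞. Let X be a real normed space and (e_i)_{i≥1} a normalized 1-unconditional sequence in X satisfying lower p and upper q estimates on block sequences with constant one. Let P ⊆ ℕ and M = {k_1 < k_2 < …} ⊆ ℕ satisfy Assumption A(d, ε/4), and set Q = {k_{2j} : j ≥ 1}. Then for all m̄ = (m_1 < … < m_d) with m_1,…,m_d ∈ Q, all k ∈ Q with k > m_d, and all step preserving maps F : S⁺_{ℓ∞^k} → S⁺_{X_k} with ω_F(1/d) ≤ ε/8, one has ‖F(z(m̄)) − (1/ψ(k))·∑_{i=1}^k e_i‖ ≤ ε. -/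
/-- `ψ(k) = ‖∑_{i=1}^k e_i‖`. -/
noncomputable def psi {X : Type*} [NormedAddCommGroup X] (e : ℕ → X) (k : ℕ) : ℝ :=
  ‖∑ i ∈ Finset.Icc 1 k, e i‖

/-- `ψ_P(k) = min(‖∑_{i ≤ k, i ∈ P} e_i‖, ‖∑_{i ≤ k, i ∉ P} e_i‖)`. -/
noncomputable def psiP {X : Type*} [NormedAddCommGroup X] (e : ℕ → X) (P : Set ℕ)
    (k : ℕ) : ℝ :=
  min ‖∑ i ∈ Finset.Icc 1 k, Set.indicator P e i‖
      ‖∑ i ∈ Finset.Icc 1 k, Set.indicator Pᶜ e i‖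

/-- The vector `z(m̄) = ∑_{s=1}^d (1 - (s-1)/d)·1_{(m_{s-1}, m_s]}` in `ℝ^k`, where
coordinate `i : Fin k` corresponds to the index `i+1 ∈ {1,…,k}`. -/
noncomputable def zVec (d k : ℕ) (m : ℕ → ℕ) : Fin k → ℝ :=
  fun i => ∑ s ∈ Finset.Icc 1 d, (1 - ((s : ℝ) - 1) / (d : ℝ)) *
    (if m (s - 1) ≤ (i : ℕ) ∧ (i : ℕ) < m s then 1 else 0)

/-- Monotonicity of the norm in the absolute values of the coefficients. -/
def UncondMono {X : Type*} [NormedAddCommGroup X] [NormedSpace ℝ X] (e : ℕ → X) : Prop :=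
  ∀ (s : Finset ℕ) (a b : ℕ → ℝ), (∀ i ∈ s, |a i| ≤ |b i|) →
    ‖∑ i ∈ s, a i • e i‖ ≤ ‖∑ i ∈ s, b i • e i‖

/-- Lower `p` and upper `q` estimates, with constant one, on block sequences of `e`. -/
def BlockEstimates {X : Type*} [NormedAddCommGroup X] [NormedSpace ℝ X] (p q : ℝ)
    (e : ℕ → X) : Prop :=
  ∀ (N : ℕ) (x : ℕ → X) (s : ℕ → ℕ),
    (∀ i, i < N → s i < s (i + 1)) →
    (∀ i, i < N → x i ∈ Submodule.span ℝ (e '' {j | s i ≤ j ∧ j < s (i + 1)})) →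
    (∑ i ∈ Finset.range N, ‖x i‖ ^ p) ^ (1 / p) ≤ ‖∑ i ∈ Finset.range N, x i‖ ∧
      ‖∑ i ∈ Finset.range N, x i‖ ≤ (∑ i ∈ Finset.range N, ‖x i‖ ^ q) ^ (1 / q)

theorem psi_eq_norm_sum_range {X : Type*} [NormedAddCommGroup X] (e : ℕ → X) (n : ℕ) :
    psi e n = ‖∑ i ∈ Finset.range n, e (i + 1)‖ := by
  rw [psi, Finset.range_eq_Ico, Finset.sum_Ico_add' e 0 n 1, zero_add]
  rfl

section Sequence

variable {X : Type*} [NormedAddCommGroup X] [NormedSpace ℝ X] {e : ℕ → X} {p q : ℝ}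

theorem UncondMono.shift (h : UncondMono e) : UncondMono (fun n => e (n + 1)) := by
  intro s a b hab
  have := h (s.map ⟨Nat.succ, Nat.succ_injective⟩) (fun n => a (n - 1)) (fun n => b (n - 1))
    (by simpa using hab)
  simpa using this

theorem BlockEstimates.shift (h : BlockEstimates p q e) :
    BlockEstimates p q (fun n => e (n + 1)) := by
  intro N x s hs hx
  refine h N x (fun i => s i + 1) (fun i hi => by simpa using hs i hi) fun i hi => ?_
  refine Submodule.span_mono ?_ (hx i hi)
  rintro _ ⟨j, ⟨h1, h2⟩, rfl⟩
  exact ⟨j + 1, ⟨by simpa using h1, by simpa using h2⟩, rfl⟩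

theorem UncondMono.norm_sum_le_of_subset (h : UncondMono e) {s t : Finset ℕ} (hst : s ⊆ t)
    {a b : ℕ → ℝ} (hab : ∀ i ∈ s, |a i| ≤ |b i|) :
    ‖∑ i ∈ s, a i • e i‖ ≤ ‖∑ i ∈ t, b i • e i‖ := by
  classical
  have h1 := h t (fun i => if i ∈ s then a i else 0) b (fun i _ => by
    by_cases hi : i ∈ s
    · simpa [hi] using hab i hi
    · simp [hi])
  have h2 : ∑ i ∈ t, (if i ∈ s then a i else 0) • e i = ∑ i ∈ s, a i • e i := by
    rw [← Finset.sum_subset hst]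
    · exact Finset.sum_congr rfl fun i hi => by simp [hi]
    · intro i _ hi
      simp [hi]
  rwa [h2] at h1

theorem sum_Ico_eq_sum_sum_Ico {E : Type*} [AddCommMonoid E] {M : ℕ → ℕ} (hM : Monotone M)
    (f : ℕ → E) (d : ℕ) :
    ∑ i ∈ Finset.Ico (M 0) (M d), f i =
      ∑ r ∈ Finset.range d, ∑ i ∈ Finset.Ico (M r) (M (r + 1)), f i := by
  induction d with
  | zero => simp
  | succ d ih =>
    rw [Finset.sum_range_succ, ← ih,
      Finset.sum_Ico_consecutive _ (hM (Nat.zero_le d)) (hM (Nat.le_succ d))]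

theorem BlockEstimates.norm_sum_Ico (h : BlockEstimates p q e) {M : ℕ → ℕ} (hM : StrictMono M)
    (f : ℕ → ℝ) (d : ℕ) :
    (∑ r ∈ Finset.range d, ‖∑ i ∈ Finset.Ico (M r) (M (r + 1)), f i • e i‖ ^ p) ^ (1 / p) ≤
        ‖∑ i ∈ Finset.Ico (M 0) (M d), f i • e i‖ ∧
      ‖∑ i ∈ Finset.Ico (M 0) (M d), f i • e i‖ ≤
        (∑ r ∈ Finset.range d, ‖∑ i ∈ Finset.Ico (M r) (M (r + 1)), f i • e i‖ ^ q) ^ (1 / q) := by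
  rw [sum_Ico_eq_sum_sum_Ico hM.monotone]
  refine h d _ M (fun i _ => hM (Nat.lt_succ_self i)) fun r _ => ?_
  refine Submodule.sum_mem _ fun i hi => Submodule.smul_mem _ _ (Submodule.subset_span ?_)
  exact ⟨i, by simpa using hi, rfl⟩

theorem rpow_sum_rpow_le_card_rpow_mul {d : ℕ} (hd : 1 ≤ d) (hq : 1 ≤ q) (hqp : q ≤ p)
    (t : ℕ → ℝ) (ht : ∀ r, 0 ≤ t r) :
    (∑ r ∈ Finset.range d, t r ^ q) ^ (1 / q) ≤
      (d : ℝ) ^ (1 / q - 1 / p) * (∑ r ∈ Finset.range d, t r ^ p) ^ (1 / p) := by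
  have hq0 : 0 < q := by linarith
  have hp0 : 0 < p := by linarith
  have hd0 : (0 : ℝ) < d := by exact_mod_cast hd
  have h1 : (1 : ℝ) ≤ p / q := by rwa [le_div_iff₀ hq0, one_mul]
  have h2 := Real.rpow_sum_le_const_mul_sum_rpow (Finset.range d) (fun r => t r ^ q) h1
  have h3 : ∀ r, |t r ^ q| = t r ^ q := fun r => abs_of_nonneg (Real.rpow_nonneg (ht r) q)
  have h4 : ∀ r, (t r ^ q) ^ (p / q) = t r ^ p := fun r => by
    rw [← Real.rpow_mul (ht r)]
    congr 1
    field_simp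
  simp only [h3, h4, Finset.card_range] at h2
  have hS : 0 ≤ ∑ r ∈ Finset.range d, t r ^ q :=
    Finset.sum_nonneg fun r _ => Real.rpow_nonneg (ht r) q
  have hT : 0 ≤ ∑ r ∈ Finset.range d, t r ^ p :=
    Finset.sum_nonneg fun r _ => Real.rpow_nonneg (ht r) p
  have h5 := Real.rpow_le_rpow (Real.rpow_nonneg hS _) h2 (one_div_nonneg.2 hp0.le)
  rw [← Real.rpow_mul hS, Real.mul_rpow (Real.rpow_nonneg hd0.le _) hT,
    ← Real.rpow_mul hd0.le] at h5
  have h6 : p / q * (1 / p) = 1 / q := by field_simp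
  have h7 : (p / q - 1) * (1 / p) = 1 / q - 1 / p := by field_simp
  rwa [h6, h7] at h5

/-- If the part of each block supported on `A` dominates `C` times everything before the block,
then moving block coefficients one block to the left gains the factor `d ^ (1/q - 1/p) / C`. -/
theorem norm_shifted_blocks_le (hu : UncondMono e) (hb : BlockEstimates p q e)
    (hq : 1 ≤ q) (hqp : q ≤ p) {d : ℕ} (hd : 1 ≤ d) {M : ℕ → ℕ} (hM : StrictMono M)
    (hM0 : M 0 = 0) {C : ℝ} (hC : 0 < C) {A : Set ℕ}
    (hA : ∀ r < d, C * ‖∑ i ∈ Finset.range (M (r + 1)), e i‖ ≤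
      ‖∑ i ∈ Finset.Ico (M (r + 1)) (M (r + 2)), A.indicator (fun _ => (1 : ℝ)) i • e i‖)
    {v f g : ℕ → ℝ} (hv : ∀ r, 0 ≤ v r)
    (hf : ∀ r < d, ∀ i ∈ Finset.Ico (M (r + 1)) (M (r + 2)), i ∈ A → v (r + 1) ≤ |f i|)
    (hg : ∀ r < d, ∀ i ∈ Finset.Ico (M r) (M (r + 1)), |g i| ≤ v (r + 1)) :
    ‖∑ i ∈ Finset.range (M d), g i • e i‖ ≤
      (d : ℝ) ^ (1 / q - 1 / p) / C * ‖∑ i ∈ Finset.range (M (d + 1)), f i • e i‖ := by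
  have hp0 : 0 < p := by linarith
  have hd0 : (0 : ℝ) ≤ (d : ℝ) ^ (1 / q - 1 / p) := Real.rpow_nonneg (Nat.cast_nonneg d) _
  set x : ℕ → ℝ := fun r => ‖∑ i ∈ Finset.Ico (M r) (M (r + 1)), g i • e i‖
  set y : ℕ → ℝ := fun r => ‖∑ i ∈ Finset.Ico (M (r + 1)) (M (r + 2)), f i • e i‖
  have hxy : ∀ r < d, x r ≤ C⁻¹ * y r := by
    intro r hr
    have h1 : x r ≤ ‖∑ i ∈ Finset.range (M (r + 1)), v (r + 1) • e i‖ := by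
      refine hu.norm_sum_le_of_subset (fun i hi => ?_) fun i hi => ?_
      · simp only [Finset.mem_Ico] at hi
        simpa using hi.2
      · rw [abs_of_nonneg (hv _)]
        exact hg r hr i hi
    have h2 : v (r + 1) * ‖∑ i ∈ Finset.Ico (M (r + 1)) (M (r + 2)),
        A.indicator (fun _ => (1 : ℝ)) i • e i‖ ≤ y r := by
      rw [← abs_of_nonneg (hv (r + 1)), ← Real.norm_eq_abs, ← norm_smul, Finset.smul_sum]
      simp only [smul_smul]
      refine hu _ _ _ fun i hi => ?_
      by_cases hiA : i ∈ A
      · simpa [hiA, abs_of_nonneg (hv (r + 1))] using hf r hr i hi hiA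
      · simp [hiA]
    rw [← Finset.smul_sum, norm_smul, Real.norm_of_nonneg (hv _)] at h1
    have h3 := mul_le_mul_of_nonneg_left (hA r hr) (hv (r + 1))
    rw [inv_mul_eq_div, le_div_iff₀ hC]
    nlinarith
  have hup := (hb.norm_sum_Ico hM g d).2
  have hlow := (hb.norm_sum_Ico (M := fun r => M (r + 1)) (fun a b hab => hM (by omega)) f d).1
  rw [hM0, ← Finset.range_eq_Ico] at hup
  have hlow' : (∑ r ∈ Finset.range d, y r ^ p) ^ (1 / p) ≤
      ‖∑ i ∈ Finset.range (M (d + 1)), f i • e i‖ := by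
    refine hlow.trans (hu.norm_sum_le_of_subset (fun i hi => ?_) fun i _ => le_rfl)
    simp only [Finset.mem_Ico] at hi
    simpa using hi.2
  have hx0 : ∀ r, 0 ≤ x r := fun r => norm_nonneg _
  have hy0 : ∀ r, 0 ≤ y r := fun r => norm_nonneg _
  have hmid : (∑ r ∈ Finset.range d, x r ^ p) ^ (1 / p) ≤
      C⁻¹ * (∑ r ∈ Finset.range d, y r ^ p) ^ (1 / p) := by
    have hCinv : 0 ≤ C⁻¹ := by positivity
    have h1 : ∑ r ∈ Finset.range d, x r ^ p ≤ (C⁻¹) ^ p * ∑ r ∈ Finset.range d, y r ^ p := by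
      rw [Finset.mul_sum]
      refine Finset.sum_le_sum fun r hr => ?_
      rw [← Real.mul_rpow hCinv (hy0 r)]
      exact Real.rpow_le_rpow (hx0 r) (hxy r (Finset.mem_range.1 hr)) hp0.le
    refine (Real.rpow_le_rpow (Finset.sum_nonneg fun r _ => Real.rpow_nonneg (hx0 r) p) h1
      (one_div_nonneg.2 hp0.le)).trans_eq ?_
    rw [Real.mul_rpow (Real.rpow_nonneg hCinv _)
      (Finset.sum_nonneg fun r _ => Real.rpow_nonneg (hy0 r) p), one_div,
      Real.rpow_rpow_inv hCinv hp0.ne']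
  calc ‖∑ i ∈ Finset.range (M d), g i • e i‖
      ≤ (∑ r ∈ Finset.range d, x r ^ q) ^ (1 / q) := hup
    _ ≤ (d : ℝ) ^ (1 / q - 1 / p) * (∑ r ∈ Finset.range d, x r ^ p) ^ (1 / p) :=
        rpow_sum_rpow_le_card_rpow_mul hd hq hqp x hx0
    _ ≤ (d : ℝ) ^ (1 / q - 1 / p) *
        (C⁻¹ * ‖∑ i ∈ Finset.range (M (d + 1)), f i • e i‖) := by
        refine mul_le_mul_of_nonneg_left (hmid.trans ?_) hd0
        exact mul_le_mul_of_nonneg_left hlow' (by positivity)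
    _ = _ := by ring

/-- One step of the concentration argument: `W` on the left is bounded by the perturbation errors
plus a small multiple of itself. -/
theorem norm_sub_const_le (hu : UncondMono e) (hb : BlockEstimates p q e)
    (hq : 1 ≤ q) (hqp : q ≤ p) {d : ℕ} (hd : 1 ≤ d) {M : ℕ → ℕ} (hM : StrictMono M)
    (hM0 : M 0 = 0) {C : ℝ} (hC : 0 < C) {A : Set ℕ}
    (hA : ∀ r < d, C * ‖∑ i ∈ Finset.range (M (r + 1)), e i‖ ≤
      ‖∑ i ∈ Finset.Ico (M (r + 1)) (M (r + 2)), A.indicator (fun _ => (1 : ℝ)) i • e i‖)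
    (hAc : ∀ r < d, C * ‖∑ i ∈ Finset.range (M (r + 1)), e i‖ ≤
      ‖∑ i ∈ Finset.Ico (M (r + 1)) (M (r + 2)), Aᶜ.indicator (fun _ => (1 : ℝ)) i • e i‖)
    {lev : ℕ → ℕ} (hlev : ∀ i r, lev i = r ↔ M r ≤ i ∧ i < M (r + 1))
    {a b c G H : ℕ → ℝ}
    (hG : ∀ i < M (d + 1), i ∈ A → G i = b (lev i))
    (hG' : ∀ i < M d, i ∉ A → G i = b (lev i + 1))
    (hH : ∀ i < M (d + 1), i ∉ A → H i = c (lev i))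
    (hH' : ∀ i < M d, i ∈ A → H i = c (lev i + 1))
    {δ θ : ℝ} (hθ : (d : ℝ) ^ (1 / q - 1 / p) / C = θ)
    (hδG : ‖∑ i ∈ Finset.range (M (d + 1)), (a (lev i) - G i) • e i‖ ≤ δ)
    (hδH : ‖∑ i ∈ Finset.range (M (d + 1)), (a (lev i) - H i) • e i‖ ≤ δ) :
    ‖∑ i ∈ Finset.range (M (d + 1)), (a (lev i) - a d) • e i‖ ≤ 2 * δ + 2 * θ * δ +
      θ * ‖∑ i ∈ Finset.range (M (d + 1)), (a (lev i) - a d) • e i‖ := by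
  have hθ0 : 0 ≤ θ := by
    rw [← hθ]
    exact div_nonneg (Real.rpow_nonneg (Nat.cast_nonneg d) _) hC.le
  have hlevI : ∀ r, ∀ i ∈ Finset.Ico (M r) (M (r + 1)), lev i = r := fun r i hi =>
    (hlev i r).2 (by simpa using hi)
  have hlt : ∀ r < d, ∀ i ∈ Finset.Ico (M (r + 1)) (M (r + 2)), i < M (d + 1) := by
    intro r hr i hi
    simp only [Finset.mem_Ico] at hi
    exact hi.2.trans_le (hM.monotone (by omega))
  have shift : ∀ (B : Set ℕ), (∀ r < d, C * ‖∑ i ∈ Finset.range (M (r + 1)), e i‖ ≤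
      ‖∑ i ∈ Finset.Ico (M (r + 1)) (M (r + 2)), B.indicator (fun _ => (1 : ℝ)) i • e i‖) →
      ∀ (u f : ℕ → ℝ), (∀ i < M (d + 1), i ∈ B → |u (lev i)| ≤ |f i|) →
      ‖∑ i ∈ Finset.range (M d), |u (lev i + 1)| • e i‖ ≤
        θ * ‖∑ i ∈ Finset.range (M (d + 1)), f i • e i‖ := by
    intro B hB u f huf
    rw [← hθ]
    refine norm_shifted_blocks_le hu hb hq hqp hd hM hM0 hC hB (v := fun r => |u r|)
      (fun r => abs_nonneg _) (fun r hr i hi hiB => ?_) (fun r hr i hi => ?_)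
    · have := huf i (hlt r hr i hi) hiB
      rwa [hlevI (r + 1) i hi] at this
    · rw [hlevI r i hi, abs_abs]
  have s1 := shift A hA (fun r => a r - b r) (fun i => a (lev i) - G i)
    (fun i hi hiA => by rw [hG i hi hiA])
  have s2 := shift Aᶜ hAc (fun r => a r - c r) (fun i => a (lev i) - H i)
    (fun i hi hiA => by rw [hH i hi hiA])
  have s3 := shift A hA (fun r => a r - a d) (fun i => a (lev i) - a d) (fun i _ _ => le_rfl)
  have hsub : Finset.range (M d) ⊆ Finset.range (M (d + 1)) := by
    simpa using hM.monotone (Nat.le_succ d)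
  have t1 : ‖∑ i ∈ Finset.range (M d), |a (lev i) - G i| • e i‖ ≤ δ :=
    (hu.norm_sum_le_of_subset hsub fun i _ => by rw [abs_abs]).trans hδG
  have t2 : ‖∑ i ∈ Finset.range (M d), |a (lev i) - H i| • e i‖ ≤ δ :=
    (hu.norm_sum_le_of_subset hsub fun i _ => by rw [abs_abs]).trans hδH
  have hW : ∑ i ∈ Finset.range (M (d + 1)), (a (lev i) - a d) • e i =
      ∑ i ∈ Finset.range (M d), (a (lev i) - a d) • e i := by
    refine (Finset.sum_subset hsub fun i hi hi' => ?_).symm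
    simp only [Finset.mem_range, not_lt] at hi hi'
    rw [(hlev i d).2 ⟨hi', hi⟩, sub_self, zero_smul]
  have hpt : ‖∑ i ∈ Finset.range (M d), (a (lev i) - a d) • e i‖ ≤
      ‖∑ i ∈ Finset.range (M d), (|a (lev i) - G i| + |a (lev i) - H i| +
        |a (lev i + 1) - b (lev i + 1)| + |a (lev i + 1) - c (lev i + 1)| +
        |a (lev i + 1) - a d|) • e i‖ := by
    refine hu _ _ _ fun i hi => ?_
    rw [abs_of_nonneg (by positivity : 0 ≤ |a (lev i) - G i| + |a (lev i) - H i| +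
        |a (lev i + 1) - b (lev i + 1)| + |a (lev i + 1) - c (lev i + 1)| +
        |a (lev i + 1) - a d|)]
    have hi' := Finset.mem_range.1 hi
    by_cases hiA : i ∈ A
    · have h1 : a (lev i) - a d = (a (lev i) - H i) - (a (lev i + 1) - c (lev i + 1)) +
          (a (lev i + 1) - a d) := by rw [hH' i hi' hiA]; ring
      rw [h1]
      refine (abs_add_le _ _).trans ?_
      have := abs_sub (a (lev i) - H i) (a (lev i + 1) - c (lev i + 1))
      have := abs_nonneg (a (lev i) - G i)
      have := abs_nonneg (a (lev i + 1) - b (lev i + 1))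
      linarith
    · have h1 : a (lev i) - a d = (a (lev i) - G i) - (a (lev i + 1) - b (lev i + 1)) +
          (a (lev i + 1) - a d) := by rw [hG' i hi' hiA]; ring
      rw [h1]
      refine (abs_add_le _ _).trans ?_
      have := abs_sub (a (lev i) - G i) (a (lev i + 1) - b (lev i + 1))
      have := abs_nonneg (a (lev i) - H i)
      have := abs_nonneg (a (lev i + 1) - c (lev i + 1))
      linarith
  simp only [add_smul, Finset.sum_add_distrib] at hpt
  have n1 := hpt.trans (norm_add_le_of_le (norm_add_le_of_le (norm_add_le_of_le
    (norm_add_le_of_le t1 t2) s1) s2) s3)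
  rw [← hW] at n1
  have m1 := mul_le_mul_of_nonneg_left hδG hθ0
  have m2 := mul_le_mul_of_nonneg_left hδH hθ0
  linarith

theorem UncondMono.psi_mono (h : UncondMono e) : Monotone (psi e) := by
  intro a b hab
  have := h.norm_sum_le_of_subset (Finset.Icc_subset_Icc_right hab : Finset.Icc 1 a ⊆ _)
    (a := fun _ => 1) (b := fun _ => 1) fun i _ => le_rfl
  simpa [psi] using this

/-- If the part of `[1, N]` supported on `P` has at least half of the norm and `ψ` grows fast
from `n` to `N`, then the part of `(n, N]` supported on `P` dominates `C * ψ(n)`. -/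
theorem UncondMono.mul_le_norm_sum_Ico (h : UncondMono e) {P : Set ℕ} {n N : ℕ} (hnN : n ≤ N)
    {C : ℝ} (hP : (psi e N - 1) / 2 ≤ ‖∑ i ∈ Finset.Icc 1 N, P.indicator e i‖)
    (hgrow : (2 * C + 2) * psi e n + 1 ≤ psi e N) :
    C * ‖∑ i ∈ Finset.range n, e (i + 1)‖ ≤ ‖∑ i ∈ Finset.Ico n N,
      {i | i + 1 ∈ P}.indicator (fun _ => (1 : ℝ)) i • e (i + 1)‖ := by
  have h1 : ∑ i ∈ Finset.Icc 1 N, P.indicator e i = ∑ i ∈ Finset.range N,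
      {i | i + 1 ∈ P}.indicator (fun _ => (1 : ℝ)) i • e (i + 1) := by
    have : ∀ i, {i | i + 1 ∈ P}.indicator (fun _ => (1 : ℝ)) i • e (i + 1) =
        P.indicator e (i + 1) := fun i => by
      by_cases hi : i + 1 ∈ P <;> simp [hi]
    simp only [this]
    rw [Finset.range_eq_Ico, Finset.sum_Ico_add' (P.indicator e) 0 N 1, zero_add]
    rfl
  have h2 : ‖∑ i ∈ Finset.range n,
      {i | i + 1 ∈ P}.indicator (fun _ => (1 : ℝ)) i • e (i + 1)‖ ≤ psi e n := by
    rw [psi_eq_norm_sum_range]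
    have := h.shift (Finset.range n) ({i | i + 1 ∈ P}.indicator (fun _ => (1 : ℝ)))
      (fun _ => 1) fun i _ => by by_cases hi : i + 1 ∈ P <;> simp [hi]
    simpa only [one_smul] using this
  rw [h1, ← Finset.sum_range_add_sum_Ico _ hnN] at hP
  have h3 := hP.trans (norm_add_le _ _)
  rw [← psi_eq_norm_sum_range]
  linarith

end Sequence

theorem supNorm_le {k : ℕ} {x : Fin k → ℝ} {c : ℝ} (hc : 0 ≤ c) (h : ∀ i, |x i| ≤ c) :
    supNorm x ≤ c :=
  Real.iSup_le h hc

/-- The vector with value `1 - L(i)/d` at `i`. -/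
noncomputable def levelVec (d k : ℕ) (L : ℕ → ℕ) : Fin k → ℝ :=
  fun i => 1 - (L i : ℝ) / d

theorem levelVec_nonneg {d k : ℕ} (hd : 1 ≤ d) {L : ℕ → ℕ} (hL : ∀ i < k, L i ≤ d) (i : Fin k) :
    0 ≤ levelVec d k L i := by
  have hd0 : (0 : ℝ) < d := by exact_mod_cast hd
  have : (L i : ℝ) ≤ d := by exact_mod_cast hL i i.2
  rw [levelVec, sub_nonneg, div_le_one hd0]
  exact this

theorem supNorm_levelVec {d k : ℕ} (hd : 1 ≤ d) {L : ℕ → ℕ} (hL : ∀ i < k, L i ≤ d)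
    (h0 : ∃ i < k, L i = 0) : supNorm (levelVec d k L) = 1 := by
  apply le_antisymm
  · refine supNorm_le zero_le_one fun i => ?_
    rw [abs_of_nonneg (levelVec_nonneg hd hL i), levelVec, sub_le_self_iff]
    positivity
  · obtain ⟨i, hik, hi⟩ := h0
    have := le_ciSup (Set.finite_range fun j => |levelVec d k L j|).bddAbove ⟨i, hik⟩
    simpa [levelVec, hi, supNorm] using this

theorem supNorm_levelVec_sub_le {d k : ℕ} {L L' : ℕ → ℕ}
    (h : ∀ i < k, L i ≤ L' i ∧ L' i ≤ L i + 1) :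
    supNorm (levelVec d k L - levelVec d k L') ≤ 1 / (d : ℝ) := by
  refine supNorm_le (by positivity) fun i => ?_
  obtain ⟨h1, h2⟩ := h i i.2
  have h1' : (L i : ℝ) ≤ L' i := by exact_mod_cast h1
  have h2' : (L' i : ℝ) ≤ L i + 1 := by exact_mod_cast h2
  have h3 : (levelVec d k L - levelVec d k L') i = ((L' i : ℝ) - L i) / d := by
    simp only [Pi.sub_apply, levelVec]
    ring
  rw [h3, abs_of_nonneg (div_nonneg (by linarith) (Nat.cast_nonneg d))]
  exact div_le_div_of_nonneg_right (by linarith) (Nat.cast_nonneg d)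

theorem exists_eq_comp_level {d k : ℕ} {L : ℕ → ℕ} {y : Fin k → ℝ}
    (h : ∀ i j, levelVec d k L i = levelVec d k L j → y i = y j) :
    ∃ a : ℕ → ℝ, ∀ i : Fin k, y i = a (L i) := by
  have hf : Function.FactorsThrough y (fun i : Fin k => L i) := fun i j hij => by
    refine h i j ?_
    simp only at hij
    simp only [levelVec, hij]
  exact ⟨Function.extend (fun i : Fin k => L i) y 0, fun i => (hf.extend_apply 0 i).symm⟩

theorem exists_level {M : ℕ → ℕ} (hM : StrictMono M) (hM0 : M 0 = 0) :
    ∃ lev : ℕ → ℕ, ∀ i r, lev i = r ↔ M r ≤ i ∧ i < M (r + 1) := by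
  have hex : ∀ i, ∃ r, M r ≤ i ∧ i < M (r + 1) := by
    intro i
    have hlt : ∃ r, i < M (r + 1) := ⟨i, hM.le_apply⟩
    refine ⟨Nat.find hlt, ?_, Nat.find_spec hlt⟩
    rcases hr : Nat.find hlt with _ | r
    · omega
    · exact not_lt.1 (Nat.find_min hlt (m := r) (by omega))
  choose lev hlev using hex
  refine ⟨lev, fun i r => ⟨fun h => h ▸ hlev i, fun ⟨h1, h2⟩ => ?_⟩⟩
  have := hM.lt_iff_lt.1 ((hlev i).1.trans_lt h2)
  have := hM.lt_iff_lt.1 (h1.trans_lt (hlev i).2)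
  omega

theorem zVec_eq_levelVec {d k : ℕ} (hd : 1 ≤ d) {m lev : ℕ → ℕ}
    (hlev : ∀ i, ∀ r < d, lev i = r ↔ m r ≤ i ∧ i < m (r + 1)) (hle : ∀ i < k, lev i ≤ d) :
    zVec d k m = levelVec d k lev := by
  funext i
  have hd0 : (d : ℝ) ≠ 0 := by
    have : d ≠ 0 := by omega
    exact_mod_cast this
  have hterm : zVec d k m i = ∑ s ∈ Finset.Icc 1 d,
      if s = lev i + 1 then 1 - (lev i : ℝ) / d else 0 := by
    refine Finset.sum_congr rfl fun s hs => ?_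
    obtain ⟨h1, h2⟩ := Finset.mem_Icc.1 hs
    obtain ⟨r, rfl⟩ : ∃ r, s = r + 1 := ⟨s - 1, by omega⟩
    have := hlev i r (by omega)
    by_cases h : lev i = r
    · have h' := this.1 h
      simp [h, h']
    · have h' : ¬ (m r ≤ (i : ℕ) ∧ (i : ℕ) < m (r + 1)) := fun h' => h (this.2 h')
      have h'' : ¬ r = lev i := fun h' => h h'.symm
      simp [h', h'']
  rw [hterm, Finset.sum_ite_eq', levelVec]
  split_ifs with h
  · rfl
  · have h1 : lev i = d := by
      have := hle i i.2
      simp only [Finset.mem_Icc, not_and, not_le] at h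
      have := h (by omega)
      omega
    rw [h1, div_self hd0, sub_self]

/-- A normalized vector close to a nonnegative multiple of `u` is close to `u / ‖u‖`. -/
theorem norm_sub_inv_norm_smul_le {X : Type*} [NormedAddCommGroup X] [NormedSpace ℝ X]
    {x u : X} (hx : ‖x‖ = 1) (hu : u ≠ 0) {t : ℝ} (ht : 0 ≤ t) :
    ‖x - ‖u‖⁻¹ • u‖ ≤ 2 * ‖x - t • u‖ := by
  have hu0 : 0 < ‖u‖ := norm_pos_iff.2 hu
  have h1 : ‖t • u - ‖u‖⁻¹ • u‖ ≤ ‖x - t • u‖ := by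
    have h2 : ‖t • u - ‖u‖⁻¹ • u‖ = |‖x‖ - ‖t • u‖| := by
      have h3 : |t - ‖u‖⁻¹| * ‖u‖ = |(t - ‖u‖⁻¹) * ‖u‖| := by rw [abs_mul, abs_norm]
      rw [← sub_smul, norm_smul, norm_smul, hx, Real.norm_of_nonneg ht, Real.norm_eq_abs, h3,
        sub_mul, inv_mul_cancel₀ hu0.ne', abs_sub_comm]
    rw [h2]
    exact abs_norm_sub_norm_le x (t • u)
  calc ‖x - ‖u‖⁻¹ • u‖ = ‖(x - t • u) + (t • u - ‖u‖⁻¹ • u)‖ := by rw [sub_add_sub_cancel]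
    _ ≤ _ := norm_add_le _ _
    _ ≤ _ := by linarith

/-- Theorem 6.1 of the paper: concentration inequality for step preserving
maps `F : S⁺_{ℓ∞^k} → S⁺_{X_k}` under Assumption A(d, ε/4), along `Q = {k_{2j} : j ≥ 1}`. -/
theorem stmt_17 {X : Type*} [NormedAddCommGroup X] [NormedSpace ℝ X]
    (d : ℕ) (hd : 1 ≤ d) (ε : ℝ) (hε0 : 0 < ε) (hε1 : ε ≤ 1)
    (q p : ℝ) (hq : 1 ≤ q) (hqp : q ≤ p)
    (e : ℕ → X)
    (hnorm : ∀ i, 1 ≤ i → ‖e i‖ = 1)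
    (huncond : ∀ (s : Finset ℕ) (a b : ℕ → ℝ), (∀ i ∈ s, |a i| ≤ |b i|) →
      ‖∑ i ∈ s, a i • e i‖ ≤ ‖∑ i ∈ s, b i • e i‖)
    (hblock : ∀ (N : ℕ) (x : ℕ → X) (s : ℕ → ℕ),
      (∀ i, i < N → s i < s (i + 1)) →
      (∀ i, i < N → x i ∈ Submodule.span ℝ (e '' {j | s i ≤ j ∧ j < s (i + 1)})) →
      (∑ i ∈ Finset.range N, ‖x i‖ ^ p) ^ (1 / p) ≤ ‖∑ i ∈ Finset.range N, x i‖ ∧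
        ‖∑ i ∈ Finset.range N, x i‖ ≤ (∑ i ∈ Finset.range N, ‖x i‖ ^ q) ^ (1 / q))
    -- `P` and `M = {kseq 1 < kseq 2 < …}` satisfy Assumption A(d, ε/4):
    (P : Set ℕ) (kseq : ℕ → ℕ)
    (hkmono : ∀ j, 1 ≤ j → kseq j < kseq (j + 1))
    (hA1 : ∀ k, (psi e k - 1) / 2 ≤ psiP e P k)
    (hA2 : ∀ j, 1 ≤ j → (∃ i, kseq j < i ∧ i ≤ kseq (j + 1) ∧ i ∈ P) ∧
      (∃ i, kseq j < i ∧ i ≤ kseq (j + 1) ∧ i ∉ P))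
    (hA3 : ∀ j, 1 ≤ j →
      (8 * (d : ℝ) ^ ((1 : ℝ) / q - 1 / p) / (ε / 4) + 2) * psi e (kseq j) + 1 ≤
        psi e (kseq (j + 1)))
    -- `m̄ = (m_1 < … < m_d)` with entries in `Q = {kseq (2j) : j ≥ 1}`, and `k ∈ Q`:
    (m : ℕ → ℕ) (hm0 : m 0 = 0)
    (hmono : ∀ s, s < d → m s < m (s + 1))
    (hmQ : ∀ s, 1 ≤ s → s ≤ d → ∃ j, 1 ≤ j ∧ m s = kseq (2 * j))
    (k : ℕ) (hkQ : ∃ j, 1 ≤ j ∧ k = kseq (2 * j)) (hkm : m d < k)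
    -- `F : S⁺_{ℓ∞^k} → S⁺_{X_k}` is step preserving with `ω_F(1/d) ≤ ε/8`:
    (F : (Fin k → ℝ) → (Fin k → ℝ))
    (hFmaps : ∀ x : Fin k → ℝ, supNorm x = 1 → (∀ i, 0 ≤ x i) →
      (‖∑ i : Fin k, F x i • e ((i : ℕ) + 1)‖ = 1 ∧ ∀ i, 0 ≤ F x i))
    (hstep : ∀ x : Fin k → ℝ, supNorm x = 1 → (∀ i, 0 ≤ x i) →
      ∀ i j, x i = x j → F x i = F x j)
    (homega : ∀ x y : Fin k → ℝ, supNorm x = 1 → (∀ i, 0 ≤ x i) →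
      supNorm y = 1 → (∀ i, 0 ≤ y i) → supNorm (x - y) ≤ 1 / (d : ℝ) →
      ‖(∑ i : Fin k, F x i • e ((i : ℕ) + 1)) -
        ∑ i : Fin k, F y i • e ((i : ℕ) + 1)‖ ≤ ε / 8) :
    ‖(∑ i : Fin k, F (zVec d k m) i • e ((i : ℕ) + 1)) -
      (psi e k)⁻¹ • ∑ i ∈ Finset.Icc 1 k, e i‖ ≤ ε := by
  have hu : UncondMono e := huncond
  have hb : BlockEstimates p q e := hblock
  have hd0 : (0 : ℝ) < d := by exact_mod_cast hd
  set γ : ℝ := (d : ℝ) ^ ((1 : ℝ) / q - 1 / p) with hγ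
  have hγ0 : 0 < γ := Real.rpow_pos_of_pos hd0 _
  set C : ℝ := 16 * γ / ε with hCdef
  have hC : 0 < C := by positivity
  have hθ : γ / C = ε / 16 := by
    rw [hCdef]
    field_simp
  have hkS : StrictMono fun n => kseq (n + 1) :=
    strictMono_nat_of_lt_succ fun n => hkmono (n + 1) (by omega)
  obtain ⟨M, hMm, hMk, hM⟩ : ∃ M : ℕ → ℕ, (∀ r ≤ d, M r = m r) ∧ M (d + 1) = k ∧
      StrictMono M := by
    refine ⟨fun r => if r ≤ d then m r else k + (r - (d + 1)), fun r hr => if_pos hr, by simp,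
      strictMono_nat_of_lt_succ fun r => ?_⟩
    rcases lt_trichotomy r d with h | h | h
    · simpa [h.le, Nat.succ_le_of_lt h] using hmono r h
    · simpa [h] using hkm
    · have h1 : ¬ r ≤ d := by omega
      have h2 : ¬ r + 1 ≤ d := by omega
      simp only [h1, h2, if_false]
      omega
  have hM0 : M 0 = 0 := by rw [hMm 0 (Nat.zero_le d), hm0]
  have hMQ : ∀ s, 1 ≤ s → s ≤ d + 1 → ∃ j, 1 ≤ j ∧ M s = kseq (2 * j) := by
    intro s h1 h2
    rcases Nat.lt_or_ge d s with h | h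
    · obtain rfl : s = d + 1 := by omega
      rw [hMk]
      exact hkQ
    · rw [hMm s h]
      exact hmQ s h1 h
  have hgrow : ∀ r < d, (2 * C + 2) * psi e (M (r + 1)) + 1 ≤ psi e (M (r + 2)) := by
    intro r hr
    obtain ⟨j, hj, hMj⟩ := hMQ (r + 1) (by omega) (by omega)
    obtain ⟨j', hj', hMj'⟩ := hMQ (r + 2) (by omega) (by omega)
    have hlt : kseq (2 * j - 1 + 1) < kseq (2 * j' - 1 + 1) := by
      rw [Nat.sub_add_cancel (by omega), Nat.sub_add_cancel (by omega), ← hMj, ← hMj']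
      exact hM (by omega)
    have hjj := hkS.lt_iff_lt.1 hlt
    have hle : kseq (2 * j + 1) ≤ kseq (2 * j' - 1 + 1) := hkS.monotone (by omega)
    rw [Nat.sub_add_cancel (by omega), ← hMj'] at hle
    have h1 := (hA3 (2 * j) (by omega)).trans (hu.psi_mono hle)
    have h2 : 8 * γ / (ε / 4) + 2 = 2 * C + 2 := by
      rw [hCdef]
      field_simp
      ring
    rwa [h2, ← hMj] at h1
  set A : Set ℕ := {i | i + 1 ∈ P} with hAdef
  have hAc : {i | i + 1 ∈ Pᶜ} = Aᶜ := rfl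
  have hMle : ∀ r, M (r + 1) ≤ M (r + 2) := fun r => hM.monotone (by omega)
  have hdomA : ∀ r < d, C * ‖∑ i ∈ Finset.range (M (r + 1)), e (i + 1)‖ ≤
      ‖∑ i ∈ Finset.Ico (M (r + 1)) (M (r + 2)),
        A.indicator (fun _ => (1 : ℝ)) i • e (i + 1)‖ := fun r hr =>
    hu.mul_le_norm_sum_Ico (hMle r) ((hA1 _).trans (min_le_left _ _)) (hgrow r hr)
  have hdomAc : ∀ r < d, C * ‖∑ i ∈ Finset.range (M (r + 1)), e (i + 1)‖ ≤
      ‖∑ i ∈ Finset.Ico (M (r + 1)) (M (r + 2)),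
        Aᶜ.indicator (fun _ => (1 : ℝ)) i • e (i + 1)‖ := fun r hr =>
    hu.mul_le_norm_sum_Ico (P := Pᶜ) (hMle r) ((hA1 _).trans (min_le_right _ _)) (hgrow r hr)
  obtain ⟨lev, hlev⟩ := exists_level hM hM0
  have hlevle : ∀ i < k, lev i ≤ d := by
    intro i hi
    have h1 := ((hlev i (lev i)).1 rfl).1.trans_lt hi
    rw [← hMk] at h1
    have := hM.lt_iff_lt.1 h1
    omega
  have hlevlt : ∀ i < M d, lev i < d := fun i hi =>
    hM.lt_iff_lt.1 (((hlev i (lev i)).1 rfl).1.trans_lt hi)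
  have hz : zVec d k m = levelVec d k lev := by
    refine zVec_eq_levelVec hd (fun i r hr => ?_) hlevle
    rw [hlev, hMm r (by omega), hMm (r + 1) (by omega)]
  obtain ⟨⟨i₁, hi₁, hi₁A⟩, i₂, hi₂, hi₂A⟩ :
      (∃ i < k, i ∈ A ∧ lev i = 0) ∧ ∃ i < k, i ∉ A ∧ lev i = 0 := by
    obtain ⟨j, hj, hMj⟩ := hMQ 1 le_rfl (by omega)
    have h1 : M 1 ≤ k := by
      rw [← hMk]
      exact hM.monotone (by omega)
    obtain ⟨⟨n, hn1, hn2, hn3⟩, n', hn1', hn2', hn3'⟩ := hA2 (2 * j - 1) (by omega)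
    rw [Nat.sub_add_cancel (by omega), ← hMj] at hn2 hn2'
    obtain ⟨n, rfl⟩ : ∃ l, n = l + 1 := ⟨n - 1, by omega⟩
    obtain ⟨n', rfl⟩ : ∃ l, n' = l + 1 := ⟨n' - 1, by omega⟩
    exact ⟨⟨n, by omega, hn3, (hlev n 0).2 ⟨by omega, by rw [zero_add]; omega⟩⟩,
      n', by omega, hn3', (hlev n' 0).2 ⟨by omega, by rw [zero_add]; omega⟩⟩
  have hpert : ∀ B : Set ℕ, (∃ i < k, i ∈ B ∧ lev i = 0) → ∃ b G : ℕ → ℝ,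
      (∀ i < k, i ∈ B → G i = b (lev i)) ∧
      (∀ i < M d, i ∉ B → G i = b (lev i + 1)) ∧
      ‖(∑ i : Fin k, F (levelVec d k lev) i • e ((i : ℕ) + 1)) -
        ∑ i : Fin k, G i • e ((i : ℕ) + 1)‖ ≤ ε / 8 := by
    classical
    rintro B ⟨i₀, hi₀, hi₀B, hi₀0⟩
    set L : ℕ → ℕ := fun i => if i ∈ B then lev i else min (lev i + 1) d with hL
    have hLle : ∀ i < k, L i ≤ d := by
      intro i hi
      have := hlevle i hi
      simp only [hL]
      split_ifs <;> omega
    have hLlev : ∀ i < k, lev i ≤ L i ∧ L i ≤ lev i + 1 := by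
      intro i hi
      have := hlevle i hi
      simp only [hL]
      split_ifs <;> omega
    have hS := supNorm_levelVec hd hLle ⟨i₀, hi₀, by simp [hL, hi₀B, hi₀0]⟩
    have hN := levelVec_nonneg (k := k) hd hLle
    obtain ⟨b, hbL⟩ := exists_eq_comp_level (hstep _ hS hN)
    have hkMd : M d ≤ k := by
      rw [← hMk]
      exact hM.monotone (Nat.le_succ d)
    refine ⟨b, fun i => b (L i), fun i hi hiB => by simp [hL, hiB], fun i hi hiB => ?_, ?_⟩
    · have := hlevlt i hi
      simp only [hL, hiB, if_false]
      rw [min_eq_left (by omega)]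
    · simp only [← hbL]
      exact homega _ _ (supNorm_levelVec hd hlevle ⟨i₀, hi₀, hi₀0⟩)
        (levelVec_nonneg hd hlevle) hS hN (supNorm_levelVec_sub_le hLlev)
  obtain ⟨b, G, hG, hG', hGδ⟩ := hpert A ⟨i₁, hi₁, hi₁A⟩
  obtain ⟨c, H, hH, hH', hHδ⟩ := hpert Aᶜ ⟨i₂, hi₂, hi₂A⟩
  have hzS := supNorm_levelVec hd hlevle ⟨i₁, hi₁, hi₁A.2⟩
  have hzN := levelVec_nonneg (k := k) hd hlevle
  obtain ⟨a, ha⟩ := exists_eq_comp_level (hstep _ hzS hzN)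
  obtain ⟨hF1, hF0⟩ := hFmaps _ hzS hzN
  have had : 0 ≤ a d := by
    have h1 : lev (M d) = d := (hlev _ _).2 ⟨le_rfl, hM (Nat.lt_succ_self d)⟩
    have h2 : M d < k := by
      rw [← hMk]
      exact hM (Nat.lt_succ_self d)
    have h3 := hF0 ⟨M d, h2⟩
    rwa [ha, h1] at h3
  rw [hz]
  simp only [ha] at hGδ hHδ hF1 ⊢
  rw [Fin.sum_univ_eq_sum_range (fun i => a (lev i) • e (i + 1))] at hGδ hHδ hF1 ⊢
  rw [Fin.sum_univ_eq_sum_range (fun i => G i • e (i + 1)), ← Finset.sum_sub_distrib] at hGδ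
  rw [Fin.sum_univ_eq_sum_range (fun i => H i • e (i + 1)), ← Finset.sum_sub_distrib] at hHδ
  simp only [← sub_smul] at hGδ hHδ
  have hmain := norm_sub_const_le hu.shift hb.shift hq hqp hd hM hM0 hC hdomA hdomAc hlev
    (a := a) (b := b) (c := c) (G := G) (H := H) (δ := ε / 8) (θ := ε / 16)
    (hMk ▸ hG) hG' (hMk ▸ hH) (fun i hi hiA => hH' i hi (by simpa using hiA)) hθ
    (hMk ▸ hGδ) (hMk ▸ hHδ)
  rw [hMk] at hmain
  set W := ‖∑ i ∈ Finset.range k, (a (lev i) - a d) • e (i + 1)‖ with hWdef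
  have hW0 : 0 ≤ W := norm_nonneg _
  have hW : W ≤ ε / 2 := by nlinarith
  have hpsi : ∑ i ∈ Finset.Icc 1 k, e i ≠ 0 := by
    have h1 := hu.psi_mono (show 1 ≤ k by omega)
    have h2 : psi e 1 = 1 := by simp [psi, hnorm]
    rw [h2] at h1
    exact norm_pos_iff.1 (zero_lt_one.trans_le h1)
  refine (norm_sub_inv_norm_smul_le hF1 hpsi had).trans ?_
  have hsum : ∑ i ∈ Finset.Icc 1 k, e i = ∑ i ∈ Finset.range k, e (i + 1) := by
    rw [Finset.range_eq_Ico, Finset.sum_Ico_add' e 0 k 1, zero_add]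
    rfl
  rw [hsum, Finset.smul_sum, ← Finset.sum_sub_distrib]
  simp only [← sub_smul]
  linarith
end
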